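/- Let X be a random vector in ℝ^d, d ≥ 1, let ℓ ∈ ℝ^d be a unit vector and c ∈ ℝ be such that ℓ·X ≤ c almost surely, and let L = {v ∈ ℝ^d : ℓ·v = c}. Then for every u_1 ∈ ℝ^d with u_1·ℓ = 0 such that E[exp((u_1 + u_2'ℓ)·X)] < ∞ for some u_2' ∈ ℝ, one has sup_{u_2 ∈ ℝ}( u_2·c − log E[exp((u_1 + u_2 ℓ)·X)] ) = − log E[exp(u_1·X)·1_{{X ∈ L}}], with the convention −log 0 = +∞. -/

import Mathlib

/-!
Write `F t = E[exp(u₁·X + t (ℓ·X - c))]`. Pulling the constant `exp(-t c)` out of the expectation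
gives `t c - log E[exp((u₁ + tℓ)·X)] = - log F t` (`coe_sub_log_eq_neg_log_tilted`), so the supremum
is that of `- log F`. Since `ℓ·X - c ≤ 0` almost surely, the integrand decreases in `t` and tends to
`exp(u₁·X) 1_{X ∈ L}` as `t → ∞`; hence `- log F` is monotone (`tilted_antitone`) and its supremum is
its limit at infinity. Dominated convergence, with the integrand at a parameter where the
expectation is finite as dominating function, identifies the limit of `F` as
`E[exp(u₁·X) 1_{X ∈ L}]` (`tendsto_tilted`), and `log` is continuous on `[0, ∞]`.
-/

open MeasureTheory ProbabilityTheory Set Filter Topology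
open scoped RealInnerProductSpace ENNReal ProbabilityTheory

noncomputable section

/-- The topological support of a measure on `ℝ^d`: the smallest closed set of full measure,
equivalently the set of points all of whose neighbourhoods have positive measure. -/
def msupp {d : ℕ} (μ : Measure (EuclideanSpace ℝ (Fin d))) : Set (EuclideanSpace ℝ (Fin d)) :=
  {x | ∀ U : Set (EuclideanSpace ℝ (Fin d)), IsOpen U → x ∈ U → 0 < μ U}

/-- The convex support `C_X` of a random vector with law `μ`. -/
def convSupp {d : ℕ} (μ : Measure (EuclideanSpace ℝ (Fin d))) : Set (EuclideanSpace ℝ (Fin d)) :=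
  convexHull ℝ (msupp μ)

/-- The logarithmic Laplace transform `K_X(u) = log E[exp(u·X)]`, with values in `(-∞, +∞]`. -/
def logLaplace {d : ℕ} (μ : Measure (EuclideanSpace ℝ (Fin d)))
    (u : EuclideanSpace ℝ (Fin d)) : EReal :=
  (∫⁻ x, ENNReal.ofReal (Real.exp ⟪u, x⟫) ∂μ).log

/-- The rate function `I_X(v) = sup_u (u·v - K_X(u))`. -/
def rateFn {d : ℕ} (μ : Measure (EuclideanSpace ℝ (Fin d)))
    (v : EuclideanSpace ℝ (Fin d)) : EReal :=
  ⨆ u : EuclideanSpace ℝ (Fin d), ((⟪u, v⟫ : ℝ) : EReal) - logLaplace μ u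

/-- The effective domain of an extended-real-valued function. -/
def edom {α : Type*} (f : α → EReal) : Set α := {x | f x < ⊤}

/-- The affine hyperplane with unit normal `ℓ` and offset `c`. -/
def hyp {d : ℕ} (ℓ : EuclideanSpace ℝ (Fin d)) (c : ℝ) : Set (EuclideanSpace ℝ (Fin d)) :=
  {v | ⟪ℓ, v⟫ = c}

/-- The hyperplane `{v : ℓ·v = c}` supports the convex set `C`: it meets `C` and `C` lies in
one of the two closed half-spaces bounded by it. -/
def SupportsSet {d : ℕ} (ℓ : EuclideanSpace ℝ (Fin d)) (c : ℝ)
    (C : Set (EuclideanSpace ℝ (Fin d))) : Prop :=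
  (hyp ℓ c ∩ C).Nonempty ∧ ((∀ x ∈ C, ⟪ℓ, x⟫ ≤ c) ∨ (∀ x ∈ C, c ≤ ⟪ℓ, x⟫))

/-- Orthogonal projection onto the hyperplane `{v : ℓ·v = c}` (for `‖ℓ‖ = 1`). -/
def projHyp {d : ℕ} (ℓ : EuclideanSpace ℝ (Fin d)) (c : ℝ)
    (v : EuclideanSpace ℝ (Fin d)) : EuclideanSpace ℝ (Fin d) :=
  v + (c - ⟪ℓ, v⟫) • ℓ

/-- A face of a convex set: a convex subset `F ⊆ C` such that any closed segment of `C` having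
a relative interior point in `F` has both endpoints in `F`. -/
def IsFaceOf {V : Type*} [AddCommGroup V] [Module ℝ V] (C F : Set V) : Prop :=
  Convex ℝ F ∧ IsExtreme ℝ C F

/-- A maximal proper face of a convex set: a nonempty proper face contained in no face
other than `C` and itself. -/
def IsMaxProperFace {V : Type*} [AddCommGroup V] [Module ℝ V] (C F : Set V) : Prop :=
  IsFaceOf C F ∧ F.Nonempty ∧ F ≠ C ∧
    ∀ F', IsFaceOf C F' → F'.Nonempty → F ⊆ F' → F' = C ∨ F' = F

/-- `F*₊(C_X)`: the maximal proper faces of the convex support carrying positive probability. -/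
def facesPlus {d : ℕ} (μ : Measure (EuclideanSpace ℝ (Fin d))) :
    Set (Set (EuclideanSpace ℝ (Fin d))) :=
  {C | IsMaxProperFace (convSupp μ) C ∧ 0 < μ C}

/-- `K_X` is steep: `|∇K_X(u_n)| → ∞` along every sequence in the interior of `D(K_X)`
converging to a boundary point of `D(K_X)`. -/
def Steep {d : ℕ} (μ : Measure (EuclideanSpace ℝ (Fin d))) : Prop :=
  ∀ (u : ℕ → EuclideanSpace ℝ (Fin d)) (u₀ : EuclideanSpace ℝ (Fin d)),
    (∀ n, u n ∈ interior (edom (logLaplace μ))) → Tendsto u atTop (𝓝 u₀) →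
    u₀ ∈ frontier (edom (logLaplace μ)) →
    Tendsto (fun n => ‖gradient (fun w => (logLaplace μ w).toReal) (u n)‖) atTop atTop

/-- Condition (a) of the projection property: for every hyperplane `L` supporting `C_X` with
`0 < P(X ∈ L) < 1`, the projections on `L` of the relative interiors of `D(K_X)` and
`D(K_{X|L})` coincide. -/
def CondA {d : ℕ} (μ : Measure (EuclideanSpace ℝ (Fin d))) : Prop :=
  ∀ (ℓ : EuclideanSpace ℝ (Fin d)) (c : ℝ), ‖ℓ‖ = 1 → SupportsSet ℓ c (convSupp μ) →
    0 < μ (hyp ℓ c) → μ (hyp ℓ c) < 1 →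
    projHyp ℓ c '' intrinsicInterior ℝ (edom (logLaplace μ)) =
      projHyp ℓ c '' intrinsicInterior ℝ (edom (logLaplace (μ[|hyp ℓ c])))

/-- Depth-`n` truncation of the (well-founded) recursive definition of the projection property. -/
def ProjPropN {d : ℕ} : ℕ → Measure (EuclideanSpace ℝ (Fin d)) → Prop
  | 0, μ => CondA μ
  | n + 1, μ => CondA μ ∧ ∀ C ∈ facesPlus μ, ProjPropN n (μ[|C])

/-- `K_X` has the projection property: condition (a) holds, and `K_{X|C}` has the projection
property for every `C ∈ F*₊(C_X)`. (The recursion on the dimension of `C_X` terminates in at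
most `d` steps, so this is equivalent to all finite-depth truncations holding.) -/
def ProjProp {d : ℕ} (μ : Measure (EuclideanSpace ℝ (Fin d))) : Prop :=
  ∀ n, ProjPropN n μ

/-- Depth-`n` truncation of the recursive definition of total steepness. -/
def TotallySteepN {d : ℕ} : ℕ → Measure (EuclideanSpace ℝ (Fin d)) → Prop
  | 0, μ => Steep μ
  | n + 1, μ => Steep μ ∧ ∀ C ∈ facesPlus μ, TotallySteepN n (μ[|C])

/-- `K_X` is totally steep: `K_X` is steep and `K_{X|C}` is totally steep for every
`C ∈ F*₊(C_X)`. -/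
def TotallySteep {d : ℕ} (μ : Measure (EuclideanSpace ℝ (Fin d))) : Prop :=
  ∀ n, TotallySteepN n μ

/-- `f` is strictly convex on `A`: `f` is affine on no nondegenerate segment contained in `A`. -/
def StrictlyConvexOnSet {d : ℕ} (f : EuclideanSpace ℝ (Fin d) → EReal)
    (A : Set (EuclideanSpace ℝ (Fin d))) : Prop :=
  ∀ x y : EuclideanSpace ℝ (Fin d), segment ℝ x y ⊆ A → x ≠ y →
    ¬ ∀ t : ℝ, t ∈ Icc (0 : ℝ) 1 →
      f ((1 - t) • x + t • y) = ((1 - t : ℝ) : EReal) * f x + ((t : ℝ) : EReal) * f y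

/-- The normalised Laplace transform `F t = E[exp(u₁·X + t (ℓ·X - c))]`, where `X` has law `μ`. -/
def tilted {d : ℕ} (μ : Measure (EuclideanSpace ℝ (Fin d))) (u₁ ℓ : EuclideanSpace ℝ (Fin d))
    (c t : ℝ) : ℝ≥0∞ :=
  ∫⁻ x, ENNReal.ofReal (Real.exp (⟪u₁, x⟫ + t * (⟪ℓ, x⟫ - c))) ∂μ

lemma tilted_eq_mul {d : ℕ} (μ : Measure (EuclideanSpace ℝ (Fin d)))
    (u₁ ℓ : EuclideanSpace ℝ (Fin d)) (c t : ℝ) :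
    tilted μ u₁ ℓ c t = ENNReal.ofReal (Real.exp (-(t * c))) *
      ∫⁻ x, ENNReal.ofReal (Real.exp ⟪u₁ + t • ℓ, x⟫) ∂μ := by
  rw [tilted, ← lintegral_const_mul' _ _ ENNReal.ofReal_ne_top]
  refine lintegral_congr fun x => ?_
  rw [← ENNReal.ofReal_mul (Real.exp_pos _).le, ← Real.exp_add, inner_add_left,
    real_inner_smul_left]
  ring_nf

lemma coe_sub_log_eq_neg_log_tilted {d : ℕ} (μ : Measure (EuclideanSpace ℝ (Fin d)))
    (u₁ ℓ : EuclideanSpace ℝ (Fin d)) (c t : ℝ) :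
    ((t * c : ℝ) : EReal) - (∫⁻ x, ENNReal.ofReal (Real.exp ⟪u₁ + t • ℓ, x⟫) ∂μ).log =
      -(tilted μ u₁ ℓ c t).log := by
  rw [tilted_eq_mul, ENNReal.log_mul_add, ENNReal.log_ofReal_of_pos (Real.exp_pos _),
    Real.log_exp, EReal.neg_add (Or.inl (EReal.coe_ne_bot _)) (Or.inl (EReal.coe_ne_top _)),
    ← EReal.coe_neg, neg_neg]

lemma tilted_antitone {d : ℕ} {μ : Measure (EuclideanSpace ℝ (Fin d))}
    {ℓ : EuclideanSpace ℝ (Fin d)} {c : ℝ} (hbound : ∀ᵐ x ∂μ, ⟪ℓ, x⟫ ≤ c)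
    (u₁ : EuclideanSpace ℝ (Fin d)) : Antitone (tilted μ u₁ ℓ c) := by
  intro s t hst
  refine lintegral_mono_ae ?_
  filter_upwards [hbound] with x hx
  refine ENNReal.ofReal_le_ofReal (Real.exp_le_exp.2 ?_)
  nlinarith

lemma tendsto_tilted {d : ℕ} {μ : Measure (EuclideanSpace ℝ (Fin d))}
    {ℓ : EuclideanSpace ℝ (Fin d)} {c : ℝ} (hbound : ∀ᵐ x ∂μ, ⟪ℓ, x⟫ ≤ c)
    {u₁ : EuclideanSpace ℝ (Fin d)} {s : ℝ} (hs : tilted μ u₁ ℓ c s ≠ ⊤) :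
    Tendsto (tilted μ u₁ ℓ c) atTop
      (𝓝 (∫⁻ x in hyp ℓ c, ENNReal.ofReal (Real.exp ⟪u₁, x⟫) ∂μ)) := by
  have hmeas : MeasurableSet (hyp ℓ c) :=
    (isClosed_eq (by fun_prop) continuous_const).measurableSet
  rw [← lintegral_indicator hmeas]
  refine tendsto_lintegral_filter_of_dominated_convergence
    (fun x => ENNReal.ofReal (Real.exp (⟪u₁, x⟫ + s * (⟪ℓ, x⟫ - c)))) ?_ ?_ hs ?_
  · exact Eventually.of_forall fun t => by fun_prop
  · filter_upwards [eventually_ge_atTop s] with t hst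
    filter_upwards [hbound] with x hx
    refine ENNReal.ofReal_le_ofReal (Real.exp_le_exp.2 ?_)
    nlinarith
  · filter_upwards [hbound] with x hx
    by_cases hxL : ⟪ℓ, x⟫ = c
    · rw [indicator_of_mem (show x ∈ hyp ℓ c from hxL)]
      simp [hxL]
    · rw [indicator_of_notMem (show x ∉ hyp ℓ c from hxL), ← ENNReal.ofReal_zero]
      refine ENNReal.tendsto_ofReal (Real.tendsto_exp_atBot.comp ?_)
      exact tendsto_atBot_add_const_left _ _
        (tendsto_id.atTop_mul_const_of_neg (sub_neg.2 (lt_of_le_of_ne hx hxL)))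

/-- **The key computation (4).** If `ℓ·X ≤ c` a.s. and `L = {v : ℓ·v = c}`, then for `u₁ ⊥ ℓ`
with `E[exp((u₁ + u₂'ℓ)·X)] < ∞` for some `u₂'`,
`sup_{u₂}(u₂ c - log E[exp((u₁ + u₂ℓ)·X)]) = - log E[exp(u₁·X) 1_{X ∈ L}]`. -/
theorem sup_eq_neg_log_restricted {d : ℕ} (hd : 1 ≤ d)
    (μ : Measure (EuclideanSpace ℝ (Fin d))) [IsProbabilityMeasure μ]
    (ℓ : EuclideanSpace ℝ (Fin d)) (c : ℝ) (hℓ : ‖ℓ‖ = 1)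
    (hbound : ∀ᵐ x ∂μ, ⟪ℓ, x⟫ ≤ c)
    (u₁ : EuclideanSpace ℝ (Fin d)) (hu₁ : ⟪u₁, ℓ⟫ = 0)
    (hfin : ∃ u₂' : ℝ, ∫⁻ x, ENNReal.ofReal (Real.exp ⟪u₁ + u₂' • ℓ, x⟫) ∂μ < ⊤) :
    (⨆ u₂ : ℝ, (((u₂ * c : ℝ)) : EReal) -
        (∫⁻ x, ENNReal.ofReal (Real.exp ⟪u₁ + u₂ • ℓ, x⟫) ∂μ).log)
      = - (∫⁻ x in hyp ℓ c, ENNReal.ofReal (Real.exp ⟪u₁, x⟫) ∂μ).log := by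
  obtain ⟨s, hs⟩ := hfin
  have hs' : tilted μ u₁ ℓ c s ≠ ⊤ := by
    rw [tilted_eq_mul]
    exact ENNReal.mul_ne_top ENNReal.ofReal_ne_top hs.ne
  simp_rw [coe_sub_log_eq_neg_log_tilted]
  have hmono : Monotone fun t => -(tilted μ u₁ ℓ c t).log := fun a b hab =>
    EReal.neg_le_neg_iff.2 (ENNReal.log_monotone (tilted_antitone hbound u₁ hab))
  have hlim : Tendsto (fun t => -(tilted μ u₁ ℓ c t).log) atTop
      (𝓝 (-(∫⁻ x in hyp ℓ c, ENNReal.ofReal (Real.exp ⟪u₁, x⟫) ∂μ).log)) :=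
    ((continuous_neg.comp ENNReal.continuous_log).tendsto _).comp (tendsto_tilted hbound hs')
  exact tendsto_nhds_unique (tendsto_atTop_iSup hmono) hlim

end
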